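/- Let 0 < q ≤ 1, η > 0, θ ≥ 0, τ ≥ 0 and fix s > 0. Define β_{n,k}(x,s) by β_{n,k} = 0 for n < 0 or k > n, β_{n,0}(x,s) = p_n(x;s), and the recurrence [k+1]_q β_{n,k+1}(x,s) = q^k [n−k]_q β_{n,k}(x,s) + [n]_q β_{n−1,k}(x,s). Then for all integers 0 ≤ j < k ≤ n one has β_{n,k}(x_j(s), s) = 0. -/

import Mathlib

/-- `[n]_q = 1 + q + ⋯ + q^{n-1}`. -/
noncomputable def qnum (q : ℝ) (n : ℕ) : ℝ := ∑ i ∈ Finset.range n, q ^ i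

/-- `[n]_q! = [1]_q [2]_q ⋯ [n]_q`. -/
noncomputable def qfact (q : ℝ) (n : ℕ) : ℝ := ∏ i ∈ Finset.range n, qnum q (i + 1)

/-- q-binomial coefficient `[n choose k]_q`, with the convention that it is `0` for `k > n`. -/
noncomputable def qbinom (q : ℝ) (n k : ℕ) : ℝ :=
  if k ≤ n then qfact q n / (qfact q (n - k) * qfact q k) else 0

/-- `a_n = η⁻¹ + θ[n]_q + [n]_q² ητ`. -/
noncomputable def aCoef (η θ τ q : ℝ) (n : ℕ) : ℝ :=
  η⁻¹ + θ * qnum q n + (qnum q n) ^ 2 * η * τ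

/-- `b_n(t) = (tη + θ + ([n]_q + [n-1]_q)ητ)[n]_q`. -/
noncomputable def bCoef (η θ τ q t : ℝ) (n : ℕ) : ℝ :=
  (t * η + θ + (qnum q n + qnum q (n - 1)) * η * τ) * qnum q n

/-- `c_n(t) = η(t + τ[n-1]_q)[n]_q`. -/
noncomputable def cCoef (η τ q t : ℝ) (n : ℕ) : ℝ :=
  η * (t + τ * qnum q (n - 1)) * qnum q n

/-- `A_n(x,s) = a_n + q^n x - sη q^n [n]_q`. -/
noncomputable def ACoef (η θ τ q x s : ℝ) (n : ℕ) : ℝ :=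
  aCoef η θ τ q n + q ^ n * x - s * η * q ^ n * qnum q n

/-- `x_k(s) = ((sη q^k - θ)[k]_q - η⁻¹ - ητ[k]_q²)/q^k`, the zero of `x ↦ A_k(x,s)`. -/
noncomputable def xPt (η θ τ q s : ℝ) (k : ℕ) : ℝ :=
  ((s * η * q ^ k - θ) * qnum q k - η⁻¹ - η * τ * (qnum q k) ^ 2) / q ^ k

/-- `[n]_q` for an integer index, with value `0` for negative indices. -/
noncomputable def qnumZ (q : ℝ) (n : ℤ) : ℝ :=
  if 0 ≤ n then ∑ i ∈ Finset.range n.toNat, q ^ i else 0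

/-!
Write `β_{k+i,k} = [k+i choose k]_q B_k(i)`. The recurrence for `β` becomes
`B_{k+1}(i) = q^k B_k(i+1) + B_k(i)`, that is, `B_{k+1} = (q^k E + 1) B_k` with `E` the shift
in `i`.

By induction on `k`, each `B_k` satisfies a three-term recurrence with coefficients `a_{k+i}`,
`d_{k,i}`, `c_i`, where `d_{0,i} = b_i`. Dividing its operator by `q^k E + 1` leaves the remainder
`A_k(x,s)`, independent of `i`:
`a_{k+i} B_{k+1}(i) + q^k c_i B_{k+1}(i-1) = A_k(x,s) B_k(i)`.
At `x = x_j(s)` the right-hand side vanishes for `k = j`, and since `c_0 = 0` and `a_n ≠ 0` the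
two-term recurrence on the left forces `B_{j+1} = 0`, hence `B_k = 0` for every `k > j`.
-/

section QAnalogues

lemma qnum_zero (q : ℝ) : qnum q 0 = 0 := Finset.sum_range_zero _

lemma qnum_add (q : ℝ) (m n : ℕ) : qnum q (m + n) = qnum q m + q ^ m * qnum q n := by
  simp only [qnum, Finset.sum_range_add, pow_add, Finset.mul_sum]

lemma qnum_succ (q : ℝ) (n : ℕ) : qnum q (n + 1) = qnum q n + q ^ n :=
  Finset.sum_range_succ _ n

lemma qnum_succ' (q : ℝ) (n : ℕ) : qnum q (n + 1) = q * qnum q n + 1 :=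
  geom_sum_succ

lemma qnum_nonneg {q : ℝ} (hq : 0 ≤ q) (n : ℕ) : 0 ≤ qnum q n :=
  Finset.sum_nonneg fun i _ => pow_nonneg hq i

lemma qnum_succ_pos {q : ℝ} (hq : 0 ≤ q) (n : ℕ) : 0 < qnum q (n + 1) :=
  geom_sum_pos hq n.succ_ne_zero

lemma qnumZ_natCast (q : ℝ) (n : ℕ) : qnumZ q n = qnum q n := by
  simp [qnumZ, qnum]

lemma qfact_zero (q : ℝ) : qfact q 0 = 1 := Finset.prod_range_zero _

lemma qfact_succ (q : ℝ) (n : ℕ) : qfact q (n + 1) = qfact q n * qnum q (n + 1) :=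
  Finset.prod_range_succ _ n

lemma qfact_ne_zero {q : ℝ} (hq : ∀ n, qnum q (n + 1) ≠ 0) (n : ℕ) : qfact q n ≠ 0 :=
  Finset.prod_ne_zero_iff.2 fun i _ => hq i

lemma qbinom_zero_right {q : ℝ} (hq : ∀ n, qnum q (n + 1) ≠ 0) (n : ℕ) : qbinom q n 0 = 1 := by
  simp [qbinom, qfact_zero, qfact_ne_zero hq]

lemma qnum_mul_qbinom_succ_succ {q : ℝ} (hq : ∀ n, qnum q (n + 1) ≠ 0) (n k : ℕ) :
    qnum q (k + 1) * qbinom q (n + 1) (k + 1) = qnum q (n + 1) * qbinom q n k := by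
  rcases le_or_gt k n with hkn | hnk
  · simp only [qbinom, if_pos hkn, if_pos (Nat.succ_le_succ hkn), Nat.add_sub_add_right, qfact_succ]
    field_simp [hq k, qfact_ne_zero hq]
  · simp [qbinom, hnk.not_ge]

lemma qnum_mul_qbinom_succ_right {q : ℝ} (hq : ∀ n, qnum q (n + 1) ≠ 0) (n k : ℕ) :
    qnum q (k + 1) * qbinom q n (k + 1) = qnum q (n - k) * qbinom q n k := by
  rcases lt_or_ge k n with hkn | hnk
  · obtain ⟨i, rfl⟩ := Nat.exists_eq_add_of_lt hkn
    have hsub : k + i + 1 - k = i + 1 := by lia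
    have hsub_succ : k + i + 1 - (k + 1) = i := by lia
    simp only [qbinom, if_pos hkn.le, if_pos (Nat.succ_le_of_lt hkn), hsub, hsub_succ,
      qfact_succ]
    field_simp [hq k, hq i, qfact_ne_zero hq]
  · simp [qbinom, Nat.sub_eq_zero_of_le hnk, qnum_zero, (Nat.lt_succ_of_le hnk).not_ge]

end QAnalogues

section NormalizedBeta

/-- The sequences `B_k(i) = β_{k+i,k} / [k+i choose k]_q` attached to an array `β` with
`β_{n,0} = f n`. The index `i = n - k` is used so that `B_{k+1}` is the image of `B_k` under the
difference operator `q^k E + 1`. -/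
def normalizedBeta {R : Type*} [Semiring R] (q : R) (f : ℕ → R) : ℕ → ℕ → R
  | 0, i => f i
  | k + 1, i => q ^ k * normalizedBeta q f k (i + 1) + normalizedBeta q f k i

lemma normalizedBeta_eq_zero_of_le {R : Type*} [Semiring R] {q : R} {f : ℕ → R} {m k : ℕ}
    (hmk : m ≤ k) (hm : ∀ i, normalizedBeta q f m i = 0) (i : ℕ) : normalizedBeta q f k i = 0 := by
  induction k, hmk using Nat.le_induction generalizing i with
  | base => exact hm i
  | succ k _ ih => simp [normalizedBeta, ih]

lemma beta_eq_qbinom_mul_normalizedBeta {q : ℝ} (hq : ∀ n, qnum q (n + 1) ≠ 0) {f : ℕ → ℝ}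
    {β : ℤ → ℤ → ℝ} (hinit : ∀ n : ℕ, β n 0 = f n)
    (hrec : ∀ n k : ℤ, 0 ≤ n → 0 ≤ k → qnumZ q (k + 1) * β n (k + 1) =
      q ^ k * qnumZ q (n - k) * β n k + qnumZ q n * β (n - 1) k) (k i : ℕ) :
    β (k + i : ℕ) k = qbinom q (k + i) k * normalizedBeta q f k i := by
  induction k generalizing i with
  | zero => simp [normalizedBeta, hinit, qbinom_zero_right hq]
  | succ k ih =>
    have hrec_nat : qnum q (k + 1) * β (k + i + 1 : ℕ) (k + 1 : ℕ) =
        q ^ k * qnum q (i + 1) * β (k + i + 1 : ℕ) k + qnum q (k + i + 1) * β (k + i : ℕ) k := by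
      have h := hrec (k + i + 1 : ℕ) k (by positivity) (by positivity)
      have hsub : ((k + i + 1 : ℕ) : ℤ) - k = (i + 1 : ℕ) := by push_cast; ring
      have hpred : ((k + i + 1 : ℕ) : ℤ) - 1 = (k + i : ℕ) := by push_cast; ring
      rwa [hsub, hpred, ← Nat.cast_succ, qnumZ_natCast, qnumZ_natCast, qnumZ_natCast,
        zpow_natCast] at h
    have hupper := qnum_mul_qbinom_succ_succ hq (k + i) k
    have hright := qnum_mul_qbinom_succ_right hq (k + i + 1) k
    rw [add_assoc k i 1, Nat.add_sub_cancel_left, ← add_assoc] at hright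
    rw [Nat.add_right_comm k 1 i]
    refine mul_left_cancel₀ (hq k) ?_
    calc qnum q (k + 1) * β (k + i + 1 : ℕ) (k + 1 : ℕ)
      _ = q ^ k * (qnum q (i + 1) * qbinom q (k + i + 1) k) * normalizedBeta q f k (i + 1)
          + qnum q (k + i + 1) * qbinom q (k + i) k * normalizedBeta q f k i := by
        rw [hrec_nat, ih i, add_assoc k i 1, ih (i + 1)]; ring
      _ = qnum q (k + 1) * (qbinom q (k + i + 1) (k + 1) * normalizedBeta q f (k + 1) i) := by
        rw [← hright, ← hupper, normalizedBeta]; ring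

end NormalizedBeta

section Coefficients

lemma aCoef_pos {η θ τ q : ℝ} (hη : 0 < η) (hθ : 0 ≤ θ) (hτ : 0 ≤ τ) (hq : 0 ≤ q) (n : ℕ) :
    0 < aCoef η θ τ q n := by
  have := qnum_nonneg hq n
  unfold aCoef
  positivity

lemma cCoef_zero (η τ q t : ℝ) : cCoef η τ q t 0 = 0 := by
  simp [cCoef, qnum_zero]

lemma ACoef_xPt {q : ℝ} (hq : q ≠ 0) (η θ τ s : ℝ) (k : ℕ) :
    ACoef η θ τ q (xPt η θ τ q s k) s k = 0 := by
  rw [ACoef, xPt, mul_div_cancel₀ _ (pow_ne_zero k hq), aCoef]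
  ring

/-- The middle coefficient `d_{k,i} = tη[k+i]_q + (θ + ([k+i]_q + [k+i-1]_q)ητ)[i]_q` of the
three-term recurrence for `i ↦ B_k(i)`. Here `[k+i-1]_q` is written as `[k]_q + q^k [i-1]_q`;
truncation at `i = 0` is harmless because of the factor `[i]_q`. -/
noncomputable def dCoef (η θ τ q t : ℝ) (k i : ℕ) : ℝ :=
  t * η * qnum q (k + i)
    + (θ + (qnum q (k + i) + (qnum q k + q ^ k * qnum q (i - 1))) * η * τ) * qnum q i

lemma dCoef_zero_left (η θ τ q t : ℝ) (n : ℕ) : dCoef η θ τ q t 0 n = bCoef η θ τ q t n := by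
  simp only [dCoef, bCoef, qnum_zero, zero_add, pow_zero, one_mul]
  ring

lemma dCoef_succ_left (η θ τ q t : ℝ) (k i : ℕ) :
    dCoef η θ τ q t (k + 1) i =
      dCoef η θ τ q t k i + q ^ k * (cCoef η τ q t (i + 1) - cCoef η τ q t i) := by
  rw [dCoef, qnum_add q (k + 1) i, qnum_succ q k, dCoef, qnum_add q k i, cCoef, cCoef]
  cases i with
  | zero =>
    simp only [Nat.zero_sub, Nat.add_sub_cancel, qnum_zero, qnum_succ']
    ring
  | succ i =>
    simp only [Nat.add_sub_cancel, qnum_succ']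
    ring

lemma ACoef_eq (η θ τ q x s : ℝ) (k i : ℕ) :
    ACoef η θ τ q x s k =
      aCoef η θ τ q (k + i) + q ^ k * (x - dCoef η θ τ q s k i)
        + (q ^ k) ^ 2 * cCoef η τ q s i := by
  simp only [ACoef, aCoef, dCoef, cCoef, qnum_add]
  ring

end Coefficients

section Recurrences

lemma cCoef_mul_normalizedBeta_succ_pred (η τ q s : ℝ) (f : ℕ → ℝ) (k i : ℕ) :
    cCoef η τ q s i * normalizedBeta q f (k + 1) (i - 1) =
      cCoef η τ q s i * (q ^ k * normalizedBeta q f k i + normalizedBeta q f k (i - 1)) := by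
  cases i with
  | zero => simp [cCoef_zero]
  | succ i => rfl

variable {η θ τ q s x : ℝ} {f : ℕ → ℝ}
  (hf : ∀ n, x * f n =
    aCoef η θ τ q n * f (n + 1) + bCoef η θ τ q s n * f n + cCoef η τ q s n * f (n - 1))
include hf

lemma normalizedBeta_three_term (k i : ℕ) :
    x * normalizedBeta q f k i =
      aCoef η θ τ q (k + i) * normalizedBeta q f k (i + 1)
        + dCoef η θ τ q s k i * normalizedBeta q f k i
        + cCoef η τ q s i * normalizedBeta q f k (i - 1) := by
  induction k generalizing i with
  | zero => simpa only [normalizedBeta, dCoef_zero_left, zero_add] using hf i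
  | succ k ih =>
    have hd := dCoef_succ_left η θ τ q s k i
    have ha : aCoef η θ τ q (k + i) + q ^ k * dCoef η θ τ q s k (i + 1) =
        aCoef η θ τ q (k + i + 1) + q ^ k * dCoef η θ τ q s (k + 1) i := by
      linear_combination ACoef_eq η θ τ q x s k (i + 1) - ACoef_eq η θ τ q x s k i - q ^ k * hd
    have hnext := ih (i + 1)
    rw [Nat.add_sub_cancel, ← add_assoc] at hnext
    rw [cCoef_mul_normalizedBeta_succ_pred, Nat.add_right_comm k 1 i, normalizedBeta,
      normalizedBeta]
    linear_combination q ^ k * hnext + ih i + normalizedBeta q f k (i + 1) * ha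
      - normalizedBeta q f k i * hd

lemma normalizedBeta_succ_two_term (k i : ℕ) :
    aCoef η θ τ q (k + i) * normalizedBeta q f (k + 1) i
        + q ^ k * (cCoef η τ q s i * normalizedBeta q f (k + 1) (i - 1)) =
      ACoef η θ τ q x s k * normalizedBeta q f k i := by
  rw [cCoef_mul_normalizedBeta_succ_pred, ACoef_eq η θ τ q x s k i, normalizedBeta]
  linear_combination -q ^ k * normalizedBeta_three_term hf k i

lemma normalizedBeta_succ_eq_zero (ha : ∀ n, aCoef η θ τ q n ≠ 0) {k : ℕ}
    (hA : ACoef η θ τ q x s k = 0) (i : ℕ) : normalizedBeta q f (k + 1) i = 0 := by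
  have htwo := normalizedBeta_succ_two_term hf k
  simp only [hA, zero_mul] at htwo
  induction i with
  | zero => simpa [cCoef_zero, ha] using htwo 0
  | succ i ih => simpa [ih, ha] using htwo (i + 1)

end Recurrences

theorem stmt4_general {η θ τ q s : ℝ} (hq : q ≠ 0) (hqnum : ∀ n, qnum q (n + 1) ≠ 0)
    (ha : ∀ n, aCoef η θ τ q n ≠ 0) {j k n : ℕ} {f : ℕ → ℝ}
    (hf : ∀ n, xPt η θ τ q s j * f n =
      aCoef η θ τ q n * f (n + 1) + bCoef η θ τ q s n * f n + cCoef η τ q s n * f (n - 1))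
    {β : ℤ → ℤ → ℝ} (hinit : ∀ n : ℕ, β n 0 = f n)
    (hrec : ∀ n k : ℤ, 0 ≤ n → 0 ≤ k → qnumZ q (k + 1) * β n (k + 1) =
      q ^ k * qnumZ q (n - k) * β n k + qnumZ q n * β (n - 1) k)
    (hjk : j < k) (hkn : k ≤ n) : β n k = 0 := by
  obtain ⟨i, rfl⟩ := Nat.exists_eq_add_of_le hkn
  have hsucc := normalizedBeta_succ_eq_zero hf ha (ACoef_xPt hq η θ τ s j)
  rw [beta_eq_qbinom_mul_normalizedBeta hqnum hinit hrec,
    normalizedBeta_eq_zero_of_le hjk hsucc, mul_zero]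

/-- for `0 < q ≤ 1`, `η > 0`, `θ ≥ 0`, `τ ≥ 0`, `s > 0`, define `β_{n,k}(x,s)` by
`β_{n,k} = 0` for `n < 0` or `k > n`, `β_{n,0}(x,s) = p_n(x;s)`, and the recurrence
`[k+1]_q β_{n,k+1} = q^k [n-k]_q β_{n,k} + [n]_q β_{n-1,k}`.  Then `β_{n,k}(x_j(s),s) = 0`
whenever `0 ≤ j < k ≤ n`. -/
theorem stmt4 (η θ τ q s : ℝ)
    (hq0 : 0 < q) (hq1 : q ≤ 1) (hη : 0 < η) (hθ : 0 ≤ θ) (hτ : 0 ≤ τ) (hs : 0 < s)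
    (p : ℕ → ℝ → ℝ)
    (hp0 : ∀ y : ℝ, p 0 y = 1)
    (hprec : ∀ (n : ℕ) (y : ℝ), y * p n y =
      aCoef η θ τ q n * p (n + 1) y + bCoef η θ τ q s n * p n y
        + cCoef η τ q s n * p (n - 1) y)
    (β : ℝ → ℤ → ℤ → ℝ)
    (hzero : ∀ (x : ℝ) (n k : ℤ), n < 0 ∨ n < k → β x n k = 0)
    (hinit : ∀ (x : ℝ) (n : ℕ), β x n 0 = p n x)
    (hrec : ∀ (x : ℝ) (n k : ℤ), 0 ≤ n → 0 ≤ k →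
      qnumZ q (k + 1) * β x n (k + 1) =
        q ^ k * qnumZ q (n - k) * β x n k + qnumZ q n * β x (n - 1) k) :
    ∀ j k n : ℕ, j < k → k ≤ n → β (xPt η θ τ q s j) n k = 0 :=
  fun _ _ _ => stmt4_general hq0.ne' (fun n => (qnum_succ_pos hq0.le n).ne')
    (fun n => (aCoef_pos hη hθ hτ hq0.le n).ne') (hprec · _) (hinit _) (hrec _)
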